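/- arXiv:1906.01829 — 4 statements merged into one kernel-verified Lean document; each statement's English description precedes it below -/
import Mathlib

section
/- Let d be a positive integer, let f : ℝ^d → ℝ and g : ℝ^d → ℝ, and suppose: (1) f is bounded on the box [-1,1]^d and there exist an open set A ⊇ {-1,1}^d and η > 0 such that |f(x₁) - f(x₂)| ≤ η‖x₁ - x₂‖ for all x₁, x₂ ∈ A (Euclidean norm); (2) g is continuous on [-1,1]^d, g(x) = 0 for every x ∈ {-1,1}^d, g(x) > 0 for every x ∈ [-1,1]^d with x ∉ {-1,1}^d, and for every y ∈ {-1,1}^d there exist a neighborhood S(y) of y and ε(y) > 0 such that g(x) ≥ ε(y)‖x - y‖ for all x ∈ S(y) ∩ [-1,1]^d. Then there exists β₀ ≥ 0 such that for every β > β₀, the infimum of f(x) + β·g(x) over x ∈ [-1,1]^d equals the minimum of f(x) over x ∈ {-1,1}^d. -/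
open Set

noncomputable section

/-- The box `[-1,1]^d` in `ℝ^d` (Euclidean space). -/
def box (d : ℕ) : Set (EuclideanSpace ℝ (Fin d)) :=
  {x | ∀ i, x i ∈ Set.Icc (-1 : ℝ) 1}

/-- The vertex set `{-1,1}^d` in `ℝ^d` (Euclidean space). -/
def vtx (d : ℕ) : Set (EuclideanSpace ℝ (Fin d)) :=
  {x | ∀ i, x i = -1 ∨ x i = 1}

/-- Exact-penalty equivalence: for sufficiently large `β`, the infimum of the penalized
continuous problem over the box equals the minimum of the binary problem over the vertices. -/
theorem stmt_0 (d : ℕ) (hd : 0 < d) (f g : EuclideanSpace ℝ (Fin d) → ℝ)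
    (hf_bdd : ∃ C : ℝ, ∀ x ∈ box d, |f x| ≤ C)
    (hf_holder : ∃ A : Set (EuclideanSpace ℝ (Fin d)), IsOpen A ∧ vtx d ⊆ A ∧
      ∃ η : ℝ, 0 < η ∧ ∀ x₁ ∈ A, ∀ x₂ ∈ A, |f x₁ - f x₂| ≤ η * ‖x₁ - x₂‖)
    (hg_cont : ContinuousOn g (box d))
    (hg_zero : ∀ x ∈ vtx d, g x = 0)
    (hg_pos : ∀ x ∈ box d, x ∉ vtx d → 0 < g x)
    (hg_growth : ∀ y ∈ vtx d, ∃ S ∈ nhds y, ∃ ε : ℝ, 0 < ε ∧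
      ∀ x ∈ S ∩ box d, ε * ‖x - y‖ ≤ g x) :
    ∃ β₀ : ℝ, 0 ≤ β₀ ∧ ∀ β > β₀,
      sInf ((fun x => f x + β * g x) '' box d) = sInf (f '' vtx d) := by
  obtain ⟨C, hC⟩ := hf_bdd
  obtain ⟨A, hA, hvA, η, hη, hL⟩ := hf_holder
  have hvb : vtx d ⊆ box d := by
    intro x hx i
    rcases hx i with h | h <;> rw [h] <;> constructor <;> norm_num
  have hbdd : BddBelow (f '' vtx d) := by
    refine ⟨-C, ?_⟩
    rintro _ ⟨x, hx, rfl⟩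
    exact (abs_le.mp (hC x (hvb hx))).1
  have hne : (vtx d).Nonempty := ⟨WithLp.toLp 2 (fun _ => 1), fun i => Or.inr rfl⟩
  have hm : ∀ y ∈ vtx d, sInf (f '' vtx d) ≤ f y := fun y hy =>
    csInf_le hbdd (mem_image_of_mem f hy)
  have hg0 : ∀ x ∈ box d, 0 ≤ g x := by
    intro x hx
    by_cases h : x ∈ vtx d
    · exact (hg_zero x h).ge
    · exact (hg_pos x hx h).le
  have hcomp : IsCompact (box d) := by
    have h1 : IsCompact (Set.pi Set.univ (fun _ : Fin d => Set.Icc (-1 : ℝ) 1)) :=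
      isCompact_univ_pi (fun _ => isCompact_Icc)
    have h2 := (EuclideanSpace.equiv (Fin d) ℝ).toHomeomorph.isCompact_preimage.mpr h1
    convert h2 using 1
    ext x
    simp only [box, Set.mem_preimage, Set.mem_pi, Set.mem_univ, true_imp_iff, Set.mem_setOf_eq]
    rfl
  have key : ∃ β₀ : ℝ, 0 ≤ β₀ ∧ ∀ β ≥ β₀, ∀ x ∈ box d, x ∈ box d →
      sInf (f '' vtx d) ≤ f x + β * g x := by
    refine hcomp.induction_on (p := fun s => ∃ β₀ : ℝ, 0 ≤ β₀ ∧ ∀ β ≥ β₀, ∀ x ∈ s, x ∈ box d →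
      sInf (f '' vtx d) ≤ f x + β * g x) ?_ ?_ ?_ ?_
    · exact ⟨0, le_rfl, fun _ _ x hx => hx.elim⟩
    · rintro s t hst ⟨b, hb, h⟩
      exact ⟨b, hb, fun β hβ x hx => h β hβ x (hst hx)⟩
    · rintro s t ⟨b, hb, h⟩ ⟨c, hc, h'⟩
      refine ⟨max b c, le_max_of_le_left hb, fun β hβ x hx => ?_⟩
      rcases hx with hx | hx
      · exact h β ((le_max_left _ _).trans hβ) x hx
      · exact h' β ((le_max_right _ _).trans hβ) x hx
    · intro y hy
      by_cases hyv : y ∈ vtx d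
      · obtain ⟨S, hS, ε, hε, hgr⟩ := hg_growth y hyv
        refine ⟨A ∩ S, mem_nhdsWithin_of_mem_nhds
          (Filter.inter_mem (hA.mem_nhds (hvA hyv)) hS), η / ε, by positivity, ?_⟩
        rintro β hβ x ⟨hxA, hxS⟩ hxb
        have h1 := (abs_le.mp (hL x hxA y (hvA hyv))).1
        have h2 := hgr x ⟨hxS, hxb⟩
        have h3 : η / ε * (ε * ‖x - y‖) ≤ β * g x :=
          mul_le_mul hβ h2 (by positivity) (le_trans (by positivity) hβ)
        have h4 : η / ε * (ε * ‖x - y‖) = η * ‖x - y‖ := by field_simp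
        have h5 := hm y hyv
        linarith
      · have hgy := hg_pos y hy hyv
        have hC0 : 0 ≤ C := (abs_nonneg _).trans (hC y hy)
        have hev : ∀ᶠ x in nhdsWithin y (box d), g y / 2 < g x :=
          (hg_cont y hy).eventually (lt_mem_nhds (by linarith))
        refine ⟨{x | g y / 2 < g x}, hev, 2 * C / (g y / 2), by positivity, ?_⟩
        intro β hβ x hx hxb
        have h1 := (abs_le.mp (hC x hxb)).1
        obtain ⟨v, hv⟩ := hne
        have h2 := hm v hv
        have h3 := (abs_le.mp (hC v (hvb hv))).2
        have h4 : 2 * C / (g y / 2) * (g y / 2) ≤ β * g x :=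
          mul_le_mul hβ (le_of_lt hx) (by positivity) (le_trans (by positivity) hβ)
        have h5 : 2 * C / (g y / 2) * (g y / 2) = 2 * C := by field_simp
        linarith
  obtain ⟨b, hb, h⟩ := key
  refine ⟨b, hb, fun β hβ => le_antisymm ?_ ?_⟩
  · refine le_csInf (hne.image f) ?_
    rintro _ ⟨x, hx, rfl⟩
    refine csInf_le ⟨sInf (f '' vtx d), ?_⟩ ⟨x, hvb hx, by simp [hg_zero x hx]⟩
    rintro _ ⟨z, hz, rfl⟩
    exact h β hβ.le z hz hz
  · refine le_csInf ((hne.mono hvb).image _) ?_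
    rintro _ ⟨z, hz, rfl⟩
    exact h β hβ.le z hz hz
end
end

section
/- Let d be a positive integer, let f : ℝ^d → ℝ and g : ℝ^d → ℝ, and suppose: (1) f is bounded on the box [-1,1]^d and there exist an open set A ⊇ {-1,1}^d and η > 0 such that |f(x₁) - f(x₂)| ≤ η‖x₁ - x₂‖ for all x₁, x₂ ∈ A; (2) g is continuous on [-1,1]^d, g(x) = 0 for every x ∈ {-1,1}^d, g(x) > 0 for every x ∈ [-1,1]^d with x ∉ {-1,1}^d, and for every y ∈ {-1,1}^d there exist a neighborhood S(y) of y and ε(y) > 0 such that g(x) ≥ ε(y)‖x - y‖ for all x ∈ S(y) ∩ [-1,1]^d. Then there exists β₀ ≥ 0 such that for every β > β₀ and every x* ∈ [-1,1]^d, the point x* attains the infimum of f + β·g over [-1,1]^d if and only if x* ∈ {-1,1}^d and f(x*) = min over {-1,1}^d of f. -/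
open Set

noncomputable section

/-- Minimizer-correspondence form of the exact-penalty equivalence: for sufficiently large `β`,
a point of the box attains the infimum of `f + β g` over the box iff it is a vertex minimizing
`f` over the vertex set `{-1,1}^d`. -/
theorem stmt_1 (d : ℕ) (hd : 0 < d) (f g : EuclideanSpace ℝ (Fin d) → ℝ)
    (hf_bdd : ∃ C : ℝ, ∀ x ∈ box d, |f x| ≤ C)
    (hf_holder : ∃ A : Set (EuclideanSpace ℝ (Fin d)), IsOpen A ∧ vtx d ⊆ A ∧
      ∃ η : ℝ, 0 < η ∧ ∀ x₁ ∈ A, ∀ x₂ ∈ A, |f x₁ - f x₂| ≤ η * ‖x₁ - x₂‖)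
    (hg_cont : ContinuousOn g (box d))
    (hg_zero : ∀ x ∈ vtx d, g x = 0)
    (hg_pos : ∀ x ∈ box d, x ∉ vtx d → 0 < g x)
    (hg_growth : ∀ y ∈ vtx d, ∃ S ∈ nhds y, ∃ ε : ℝ, 0 < ε ∧
      ∀ x ∈ S ∩ box d, ε * ‖x - y‖ ≤ g x) :
    ∃ β₀ : ℝ, 0 ≤ β₀ ∧ ∀ β > β₀, ∀ xs ∈ box d,
      ((∀ x ∈ box d, f xs + β * g xs ≤ f x + β * g x) ↔
        (xs ∈ vtx d ∧ ∀ y ∈ vtx d, f xs ≤ f y)) := by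
  obtain ⟨C, hC⟩ := hf_bdd
  obtain ⟨A, hAo, hvA, η, hη, hfA⟩ := hf_holder
  have hvb : ∀ x ∈ vtx d, x ∈ box d := by
    intro x hx i
    rcases hx i with h | h <;> rw [h] <;> constructor <;> norm_num
  have hv0 : (WithLp.toLp 2 (fun _ => (1 : ℝ)) : EuclideanSpace ℝ (Fin d)) ∈ vtx d := by
    intro i
    right
    rfl
  have hcomp : IsCompact (box d) := by
    have hK : IsCompact (Set.univ.pi (fun _ : Fin d => Set.Icc (-1 : ℝ) 1)) :=
      isCompact_univ_pi (fun _ => isCompact_Icc)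
    have hI := hK.image (PiLp.continuous_toLp 2 (fun _ : Fin d => ℝ))
    convert hI using 1
    ext x
    constructor
    · intro hx
      exact ⟨fun i => x i, fun i _ => hx i, rfl⟩
    · rintro ⟨y, hy, rfl⟩ i
      exact hy i (Set.mem_univ i)
  have key : ∃ B : ℝ, 0 ≤ B ∧ ∀ β > B, ∀ x ∈ box d, x ∈ box d → x ∉ vtx d →
      ∃ y ∈ vtx d, f y < f x + β * g x := by
    refine hcomp.induction_on (p := fun s => ∃ B : ℝ, 0 ≤ B ∧ ∀ β > B, ∀ x ∈ s, x ∈ box d →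
      x ∉ vtx d → ∃ y ∈ vtx d, f y < f x + β * g x) ?_ ?_ ?_ ?_
    · exact ⟨0, le_rfl, fun _ _ x hx => absurd hx (Set.notMem_empty x)⟩
    · rintro s t hst ⟨B, hB, h⟩
      exact ⟨B, hB, fun β hβ x hx => h β hβ x (hst hx)⟩
    · rintro s t ⟨B, hB, h⟩ ⟨B', hB', h'⟩
      refine ⟨max B B', le_max_of_le_left hB, fun β hβ x hx => ?_⟩
      rcases hx with hx | hx
      · exact h β (lt_of_le_of_lt (le_max_left _ _) hβ) x hx
      · exact h' β (lt_of_le_of_lt (le_max_right _ _) hβ) x hx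
    · intro p hp
      by_cases hpv : p ∈ vtx d
      · obtain ⟨S, hS, ε, hε, hg⟩ := hg_growth p hpv
        refine ⟨S ∩ A, mem_nhdsWithin_of_mem_nhds
          (Filter.inter_mem hS (hAo.mem_nhds (hvA hpv))), η / ε, by positivity, ?_⟩
        intro β hβ x hx hxb hxv
        refine ⟨p, hpv, ?_⟩
        have hne : 0 < ‖x - p‖ := by
          rw [norm_pos_iff, sub_ne_zero]
          rintro rfl
          exact hxv hpv
        have h1 := (abs_le.mp (hfA x hx.2 p (hvA hpv))).1
        have h2 := hg x ⟨hx.1, hxb⟩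
        have h3 : η < β * ε := (div_lt_iff₀ hε).mp hβ
        have hβ0 : 0 < β := lt_of_le_of_lt (by positivity) hβ
        have h4 := mul_le_mul_of_nonneg_left h2 hβ0.le
        have h5 := mul_lt_mul_of_pos_right h3 hne
        nlinarith
      · have hgp := hg_pos p hp hpv
        have hC0 : 0 ≤ C := le_trans (abs_nonneg _) (hC p hp)
        have hev : ∀ᶠ x in nhdsWithin p (box d), g p / 2 < g x :=
          (hg_cont p hp).eventually (lt_mem_nhds (by linarith))
        refine ⟨{x | g p / 2 < g x}, hev, 2 * C / (g p / 2), by positivity, ?_⟩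
        intro β hβ x hx hxb _
        refine ⟨_, hv0, ?_⟩
        have h1 := (abs_le.mp (hC _ (hvb _ hv0))).2
        have h2 := (abs_le.mp (hC x hxb)).1
        have h3 : 2 * C < β * (g p / 2) := (div_lt_iff₀ (by linarith)).mp hβ
        have hβ0 : 0 < β := lt_of_le_of_lt (by positivity) hβ
        have h4 := mul_lt_mul_of_pos_left (show g p / 2 < g x from hx) hβ0
        linarith
  obtain ⟨B, hB, h⟩ := key
  refine ⟨B, hB, fun β hβ xs hxs => ⟨fun hmin => ?_, ?_⟩⟩
  · have hv : xs ∈ vtx d := by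
      by_contra hv
      obtain ⟨y, hy, hlt⟩ := h β hβ xs hxs hxs hv
      have h1 := hmin y (hvb y hy)
      rw [hg_zero y hy] at h1
      linarith
    refine ⟨hv, fun y hy => ?_⟩
    have h1 := hmin y (hvb y hy)
    rw [hg_zero y hy, hg_zero xs hv] at h1
    linarith
  · rintro ⟨hv, hmin⟩ x hx
    rw [hg_zero xs hv]
    by_cases hxv : x ∈ vtx d
    · rw [hg_zero x hxv]
      linarith [hmin x hxv]
    · obtain ⟨y, hy, hlt⟩ := h β hβ x hx hx hxv
      linarith [hmin y hy]
end
end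

section
/- Let N be a positive integer, z ∈ ℝ^N, and let z̄ = (1/N)·Σⱼ zⱼ. Then for every index k, the limit as T → ∞ of T·( exp(z_k/T)/Σₗ exp(zₗ/T) - 1/N ) equals (z_k - z̄)/N. -/
open Filter

noncomputable section

/-- High-temperature asymptotic of the softmax: as `T → ∞`,
`T·(softmax(z/T)_k - 1/N) → (z_k - z̄)/N`, where `z̄` is the mean of the logits. -/
theorem stmt_12 (N : ℕ) (hN : 0 < N) (z : Fin N → ℝ) (k : Fin N) :
    Tendsto
      (fun T : ℝ =>
        T * (Real.exp (z k / T) / (∑ l, Real.exp (z l / T)) - 1 / N))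
      atTop
      (nhds ((z k - (∑ j, z j) / N) / N)) := by
  have hN' : (N : ℝ) ≠ 0 := by positivity
  have he : ∀ a : ℝ, HasDerivAt (fun s : ℝ => Real.exp (a * s)) a 0 := by
    intro a
    have h := ((hasDerivAt_id (0 : ℝ)).const_mul a).exp
    simpa using h
  have hs : HasDerivAt (fun s : ℝ => ∑ l, Real.exp (z l * s)) (∑ l, z l) 0 :=
    HasDerivAt.fun_sum (fun l _ => he (z l))
  have hd := (he (z k)).fun_div hs (by simpa using hN.ne')
  have ht := hd.tendsto_slope_zero_right.comp tendsto_inv_atTop_nhdsGT_zero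
  have hval : (z k - (∑ j, z j) / N) / N = (z k * (∑ l, Real.exp (z l * 0))
      - Real.exp (z k * 0) * ∑ l, z l) / (∑ l, Real.exp (z l * 0)) ^ 2 := by
    simp
    field_simp
  rw [hval]
  refine ht.congr (fun T => ?_)
  simp [div_eq_mul_inv]
end
end

section
/- Let N be a positive integer, z, v ∈ ℝ^N, z̄ = (1/N)·Σⱼ zⱼ and v̄ = (1/N)·Σⱼ vⱼ. For T > 0 define F_T(z) = -Σⱼ softmax(v/T)ⱼ · log(softmax(z/T)ⱼ), whose partial derivative with respect to z_k is (1/T)·(softmax(z/T)_k - softmax(v/T)_k). Then for every index k, the limit as T → ∞ of T²·(1/T)·( softmax(z/T)_k - softmax(v/T)_k ) equals ( (z_k - z̄) - (v_k - v̄) )/N. -/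
open Filter

noncomputable section

/-- Derivative at `0` of `s ↦ softmax(s • w)_k`. -/
lemma hasDerivAt_softmax_zero (N : ℕ) (hN : 0 < N) (w : Fin N → ℝ) (k : Fin N) :
    HasDerivAt (fun s : ℝ => Real.exp (w k * s) / ∑ l, Real.exp (w l * s))
      ((w k - (∑ j, w j) / N) / N) 0 := by
  have hN' : (N : ℝ) ≠ 0 := by exact_mod_cast hN.ne'
  have h (l : Fin N) : HasDerivAt (fun s : ℝ => Real.exp (w l * s)) (w l) 0 := by
    simpa using ((hasDerivAt_id (0 : ℝ)).const_mul (w l)).exp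
  have hs : HasDerivAt (fun s : ℝ => ∑ l, Real.exp (w l * s)) (∑ l, w l) 0 :=
    HasDerivAt.fun_sum fun l _ => h l
  have hd := (h k).fun_div hs (by simpa using hN')
  refine hd.congr_deriv ?_
  simp
  field_simp

/-- The theorem for a single softmax, centred at the uniform distribution. -/
lemma tendsto_softmax (N : ℕ) (hN : 0 < N) (w : Fin N → ℝ) (k : Fin N) :
    Tendsto (fun T : ℝ => T * (Real.exp (w k / T) / (∑ l, Real.exp (w l / T)) - 1 / N))
      atTop (nhds ((w k - (∑ j, w j) / N) / N)) := by
  have h1 : Tendsto (fun T : ℝ => T⁻¹) atTop (nhdsWithin 0 {0}ᶜ) :=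
    tendsto_inv_atTop_nhdsGT_zero.mono_right
      (nhdsWithin_mono _ fun x (hx : 0 < x) => hx.ne')
  have h2 := (hasDerivAt_softmax_zero N hN w k).tendsto_slope_zero.comp h1
  refine h2.congr fun T => ?_
  simp [div_eq_mul_inv]

/-- The gradients of the knowledge-distillation cross-entropy scale as `1/T²`: as `T → ∞`,
`T²·(1/T)·(softmax(z/T)_k - softmax(v/T)_k) → ((z_k - z̄) - (v_k - v̄))/N`, where
`softmax(w/T)_k = exp(w_k/T)/Σₗ exp(wₗ/T)` and `z̄`, `v̄` are the means of the logits. -/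
theorem stmt_13 (N : ℕ) (hN : 0 < N) (z v : Fin N → ℝ) (k : Fin N) :
    Tendsto
      (fun T : ℝ =>
        T ^ 2 * ((1 / T) *
          (Real.exp (z k / T) / (∑ l, Real.exp (z l / T)) -
            Real.exp (v k / T) / (∑ l, Real.exp (v l / T)))))
      atTop
      (nhds (((z k - (∑ j, z j) / N) - (v k - (∑ j, v j) / N)) / N)) := by
  have h := (tendsto_softmax N hN z k).sub (tendsto_softmax N hN v k)
  rw [← sub_div] at h
  refine h.congr' ?_
  filter_upwards [eventually_gt_atTop 0] with T hT
  have h3 : T ^ 2 * (1 / T) = T := by field_simp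
  rw [← mul_assoc, h3]
  ring
end
end
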